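/- arXiv:2007.03332 — 5 statements merged into one kernel-verified Lean document; each statement's English description precedes it below -/
import Mathlib

section
/- Let n ∈ ℕ, r ∈ ℕ₀ and let C ⊆ ℝⁿ × ℝ be simple. If (y₀,…,y_r) is an r-logarithmic scale on C with center (Θ₀,…,Θ_r), then Θ_j vanishes identically on π(C) for every j ∈ {0,…,r}; consequently C admits at most one r-logarithmic scale, namely the one with identically vanishing center. (Proposition 2.19: an r-simple set is r-elementary and r-unique.) -/
/-!
Statement 0 (Proposition 2.19): if `C ⊆ ℝⁿ × ℝ` is simple, then the center of any
`r`-logarithmic scale on `C` vanishes identically on `π(C)`; consequently `C` admits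
at most one `r`-logarithmic scale.
-/

/-- `C` is simple: every nonempty fiber `C_x` is an interval `(0, d_x)` with
`d_x ∈ (0, +∞]` (modelled as an extended real). -/
def IsSimple {n : ℕ} (C : Set ((Fin n → ℝ) × ℝ)) : Prop :=
  ∀ x : Fin n → ℝ, (∃ y : ℝ, (x, y) ∈ C) →
    ∃ d : EReal, 0 < d ∧ ∀ y : ℝ, ((x, y) ∈ C ↔ 0 < y ∧ (y : EReal) < d)

/-- `(Y 0, …, Y r)` is an `r`-logarithmic scale on `C` with center `(Θ 0, …, Θ r)`. -/
structure IsLogScale (n r : ℕ) (C : Set ((Fin n → ℝ) × ℝ))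
    (Θ : ℕ → (Fin n → ℝ) → ℝ) (Y : ℕ → ((Fin n → ℝ) × ℝ) → ℝ) : Prop where
  base : ∀ p ∈ C, Y 0 p = p.2 - Θ 0 p.1
  step : ∀ j : ℕ, 1 ≤ j → j ≤ r → ∀ p ∈ C, Y j p = Real.log (|Y (j - 1) p|) - Θ j p.1
  sign : ∀ j : ℕ, j ≤ r → (∀ p ∈ C, 0 < Y j p) ∨ (∀ p ∈ C, Y j p < 0)
  center0 : (∀ x ∈ Prod.fst '' C, Θ 0 x = 0) ∨
    ∃ ε ∈ Set.Ioo (0 : ℝ) 1, ∀ p ∈ C, |Y 0 p| < ε * |p.2|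
  centerSucc : ∀ j : ℕ, 1 ≤ j → j ≤ r →
    ((∀ x ∈ Prod.fst '' C, Θ j x = 0) ∨
      ∃ ε ∈ Set.Ioo (0 : ℝ) 1, ∀ p ∈ C, |Y j p| < ε * |Real.log (|Y (j - 1) p|)|)

open Filter Topology in
theorem aux_center {n r : ℕ} (C : Set ((Fin n → ℝ) × ℝ))
    (hC : IsSimple C) (Θ : ℕ → (Fin n → ℝ) → ℝ) (Y : ℕ → ((Fin n → ℝ) × ℝ) → ℝ)
    (h : IsLogScale n r C Θ Y) (x : Fin n → ℝ) (hx : x ∈ Prod.fst '' C) :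
    ∀ j ≤ r, Θ j x = 0 ∧
      Tendsto (fun y : ℝ => |Real.log (|Y j (x, y)|)|) (𝓝[>] 0) atTop := by
  have hev : ∀ᶠ y : ℝ in 𝓝[>] 0, (x, y) ∈ C := by
    obtain ⟨⟨x', y0⟩, hp, rfl⟩ := hx
    obtain ⟨d, hd, hiff⟩ := hC x' ⟨y0, hp⟩
    obtain ⟨h0, h1⟩ := (hiff y0).1 hp
    filter_upwards [Ioo_mem_nhdsGT h0] with y hy
    exact (hiff y).2 ⟨hy.1, lt_trans (EReal.coe_lt_coe_iff.2 hy.2) h1⟩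
  intro j
  induction j with
  | zero =>
    intro _
    have h0 : Θ 0 x = 0 := by
      rcases h.center0 with h0 | ⟨ε, hε, h0⟩
      · exact h0 x hx
      · have t1 : Tendsto (fun y : ℝ => |y - Θ 0 x|) (𝓝[>] 0) (𝓝 |0 - Θ 0 x|) :=
          (Continuous.tendsto (by fun_prop) 0).mono_left nhdsWithin_le_nhds
        have t2 : Tendsto (fun y : ℝ => ε * |y|) (𝓝[>] 0) (𝓝 (ε * |0|)) :=
          (Continuous.tendsto (by fun_prop) 0).mono_left nhdsWithin_le_nhds
        have := le_of_tendsto_of_tendsto t1 t2 (by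
          filter_upwards [hev] with y hy
          have := h0 _ hy
          rw [h.base _ hy] at this
          exact this.le)
        simpa using this
    refine ⟨h0, ?_⟩
    have t := tendsto_abs_atBot_atTop.comp Real.tendsto_log_nhdsGT_zero
    refine t.congr' ?_
    filter_upwards [hev] with y hy
    simp [h.base _ hy, h0]
  | succ j ih =>
    intro hj
    obtain ⟨-, t⟩ := ih (by omega)
    have hstep := h.step (j + 1) (by omega) hj
    simp only [Nat.add_sub_cancel] at hstep
    have h0 : Θ (j + 1) x = 0 := by
      rcases h.centerSucc (j + 1) (by omega) hj with h0 | ⟨ε, hε, h0⟩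
      · exact h0 x hx
      · exfalso
        obtain ⟨y, hy, hb⟩ := (hev.and
          (t.eventually_ge_atTop (|Θ (j + 1) x| / (1 - ε)))).exists
        have h1 := h0 _ hy
        rw [hstep _ hy] at h1
        simp only [Nat.add_sub_cancel] at h1
        have h2 := abs_sub_abs_le_abs_sub (Real.log |Y j (x, y)|) (Θ (j + 1) x)
        rw [div_le_iff₀ (by linarith [hε.2])] at hb
        linarith
    refine ⟨h0, ?_⟩
    have t' := tendsto_abs_atTop_atTop.comp (Real.tendsto_log_atTop.comp t)
    refine t'.congr' ?_
    filter_upwards [hev] with y hy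
    simp [hstep _ hy, h0]

/-- Proposition 2.19: on a simple set every `r`-logarithmic scale has identically
vanishing center on `π(C)`, and the scale is unique. -/
theorem center_vanishes_and_unique_of_simple {n r : ℕ} (C : Set ((Fin n → ℝ) × ℝ))
    (hC : IsSimple C) (Θ : ℕ → (Fin n → ℝ) → ℝ) (Y : ℕ → ((Fin n → ℝ) × ℝ) → ℝ)
    (h : IsLogScale n r C Θ Y) :
    (∀ j ≤ r, ∀ x ∈ Prod.fst '' C, Θ j x = 0) ∧
      ∀ (Θ' : ℕ → (Fin n → ℝ) → ℝ) (Y' : ℕ → ((Fin n → ℝ) × ℝ) → ℝ),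
        IsLogScale n r C Θ' Y' →
          (∀ j ≤ r, ∀ x ∈ Prod.fst '' C, Θ' j x = Θ j x) ∧
          (∀ j ≤ r, ∀ p ∈ C, Y' j p = Y j p) := by
  have key : ∀ (Θ : ℕ → (Fin n → ℝ) → ℝ) (Y : ℕ → ((Fin n → ℝ) × ℝ) → ℝ),
      IsLogScale n r C Θ Y → ∀ j ≤ r, ∀ x ∈ Prod.fst '' C, Θ j x = 0 :=
    fun Θ Y h j hj x hx => (aux_center C hC Θ Y h x hx j hj).1
  refine ⟨key Θ Y h, fun Θ' Y' h' => ?_⟩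
  have hΘ : ∀ j ≤ r, ∀ x ∈ Prod.fst '' C, Θ' j x = Θ j x := fun j hj x hx => by
    rw [key Θ Y h j hj x hx, key Θ' Y' h' j hj x hx]
  refine ⟨hΘ, ?_⟩
  intro j
  induction j with
  | zero =>
    intro hj p hp
    rw [h.base p hp, h'.base p hp, hΘ 0 hj p.1 ⟨p, hp, rfl⟩]
  | succ j ih =>
    intro hj p hp
    rw [h.step (j + 1) (by omega) hj p hp, h'.step (j + 1) (by omega) hj p hp,
      hΘ (j + 1) hj p.1 ⟨p, hp, rfl⟩, Nat.add_sub_cancel, ih (by omega) p hp]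
end

section
/- Let n ∈ ℕ, r ∈ ℕ₀ and let C ⊆ ℝⁿ × ℝ be simple. Suppose (y₀,…,y_r) is an r-logarithmic scale on C whose center vanishes identically. Then: (1) sup C_x ≤ 1/e_r for all x ∈ π(C); (2) y₀(x,y) = y, y₁(x,y) = log y, and y_j(x,y) = log_{j−1}(−log y) for j ∈ {2,…,r}; (3) the sign vector (sign(y₀),…,sign(y_r)) equals (+1,−1,+1,…,+1). (Proposition 2.17.) -/
/-!
Statement 1 (Proposition 2.17): for a simple set `C` and an `r`-logarithmic scale on `C`
with identically vanishing center:
(1) `sup C_x ≤ 1/e_r` for all `x ∈ π(C)` (with the convention `1/e₀ = 1/0 = +∞`;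
    since `C_x` is an open interval `(0, d_x)`, this is equivalent to `y * e_r ≤ 1`
    for all `y ∈ C_x`);
(2) `y₀ = y`, `y₁ = log y`, `y_j = log_{j-1}(-log y)` for `2 ≤ j ≤ r`;
(3) the sign vector is `(+1, -1, +1, …, +1)`.
-/

/-- iterated logarithm: `iterLog 0 t = t`, `iterLog (k+1) t = log (iterLog k t)`. -/
noncomputable def iterLog : ℕ → ℝ → ℝ
  | 0, t => t
  | k + 1, t => Real.log (iterLog k t)

/-- `ee 0 = 0`, `ee (r+1) = exp (ee r)`. -/
noncomputable def ee : ℕ → ℝ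
  | 0 => 0
  | r + 1 => Real.exp (ee r)

theorem ee_nonneg : ∀ k, 0 ≤ ee k
  | 0 => le_refl _
  | _ + 1 => (Real.exp_pos _).le

theorem ee_lt_iterLog (t : ℝ) : ∀ k m : ℕ, ee (k + m) < t → ee m < iterLog k t := by
  intro k
  induction k with
  | zero => intro m hm; simpa [iterLog] using hm
  | succ k ih =>
    intro m hm
    have h1 : ee (m + 1) < iterLog k t := ih (m + 1) (by rwa [show k + (m + 1) = k + 1 + m by ring])
    have h2 : 0 < iterLog k t := lt_of_le_of_lt (ee_nonneg _) h1
    exact (Real.lt_log_iff_exp_lt h2).2 h1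

theorem ee_lt_of_iterLog (t : ℝ) : ∀ k m : ℕ, (∀ i < k, 0 < iterLog i t) →
    ee m < iterLog k t → ee (k + m) < t := by
  intro k
  induction k with
  | zero => intro m _ hm; simpa [iterLog] using hm
  | succ k ih =>
    intro m hp hm
    have h1 : ee (m + 1) < iterLog k t := (Real.lt_log_iff_exp_lt (hp k (by omega))).1 hm
    have := ih (m + 1) (fun i hi => hp i (by omega)) h1
    rwa [show k + (m + 1) = k + 1 + m by ring] at this

/-- Proposition 2.17. -/
theorem elementary_scale_on_simple_set {n r : ℕ} (C : Set ((Fin n → ℝ) × ℝ))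
    (hC : IsSimple C) (Θ : ℕ → (Fin n → ℝ) → ℝ) (Y : ℕ → ((Fin n → ℝ) × ℝ) → ℝ)
    (h : IsLogScale n r C Θ Y)
    (hcenter : ∀ j ≤ r, ∀ x ∈ Prod.fst '' C, Θ j x = 0) :
    -- (1) `sup C_x ≤ 1/e_r` for all `x ∈ π(C)`
    (∀ p ∈ C, p.2 * ee r ≤ 1) ∧
    -- (2) explicit form of the scale
    (∀ p ∈ C, Y 0 p = p.2 ∧ (1 ≤ r → Y 1 p = Real.log p.2) ∧
      (∀ j : ℕ, 2 ≤ j → j ≤ r → Y j p = iterLog (j - 1) (-Real.log p.2))) ∧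
    -- (3) the sign vector is `(+1, -1, +1, …, +1)`
    ((∀ p ∈ C, 0 < Y 0 p) ∧ (1 ≤ r → ∀ p ∈ C, Y 1 p < 0) ∧
      (∀ j : ℕ, 2 ≤ j → j ≤ r → ∀ p ∈ C, 0 < Y j p)) := by
  have hpos : ∀ p ∈ C, 0 < p.2 := by
    rintro ⟨x, y⟩ hp
    obtain ⟨d, _, hd2⟩ := hC x ⟨y, hp⟩
    exact ((hd2 y).1 hp).1
  have hwit : ∀ p ∈ C, ∀ M : ℝ, ∃ q ∈ C, M < -Real.log q.2 := by
    rintro ⟨x, y⟩ hp M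
    obtain ⟨d, _, hd2⟩ := hC x ⟨y, hp⟩
    obtain ⟨hy, hyd⟩ := (hd2 y).1 hp
    have hm : 0 < min y (Real.exp (-(M + 1))) := lt_min hy (Real.exp_pos _)
    refine ⟨(x, min y (Real.exp (-(M + 1)))), (hd2 _).2 ⟨hm, ?_⟩, ?_⟩
    · exact lt_of_le_of_lt (EReal.coe_le_coe_iff.2 (min_le_left _ _)) hyd
    · have := Real.log_le_log hm (min_le_right _ _)
      rw [Real.log_exp] at this
      show M < -Real.log (min y (Real.exp (-(M + 1))))
      linarith
  have h0 : ∀ p ∈ C, Y 0 p = p.2 := by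
    intro p hp
    rw [h.base p hp, hcenter 0 (Nat.zero_le _) p.1 ⟨p, hp, rfl⟩, sub_zero]
  have hs : ∀ j, j + 1 ≤ r → ∀ p ∈ C, Y (j + 1) p = Real.log |Y j p| := by
    intro j hj p hp
    rw [h.step (j + 1) (by omega) hj p hp, hcenter (j + 1) hj p.1 ⟨p, hp, rfl⟩, sub_zero]
    rfl
  have h1 : 1 ≤ r → ∀ p ∈ C, Y 1 p = Real.log p.2 := by
    intro hr p hp
    rw [hs 0 hr p hp, h0 p hp, Real.log_abs]
  have h1n : 1 ≤ r → ∀ p ∈ C, Y 1 p < 0 := by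
    intro hr p hp
    rcases h.sign 1 hr with hsg | hsg
    · obtain ⟨q, hq, hM⟩ := hwit p hp 0
      have := hsg q hq
      rw [h1 hr q hq] at this
      linarith
    · exact hsg p hp
  have key : ∀ k, k + 1 ≤ r → ∀ p ∈ C, |Y (k + 1) p| = iterLog k (-Real.log p.2) ∧
      0 < iterLog k (-Real.log p.2) ∧ (0 < k → Y (k + 1) p = iterLog k (-Real.log p.2)) := by
    intro k
    induction k with
    | zero =>
      intro hr p hp
      have a := h1 hr p hp
      have b := h1n hr p hp
      refine ⟨?_, ?_, fun hk => absurd hk (lt_irrefl _)⟩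
      · show |Y 1 p| = -Real.log p.2
        rw [abs_of_neg b, a]
      · show 0 < -Real.log p.2
        linarith
    | succ k ih =>
      intro hr
      have e : ∀ p ∈ C, Y (k + 1 + 1) p = iterLog (k + 1) (-Real.log p.2) := by
        intro p hp
        rw [hs (k + 1) hr p hp, (ih (by omega) p hp).1]
        rfl
      intro p hp
      have pos : 0 < Y (k + 1 + 1) p := by
        rcases h.sign (k + 1 + 1) hr with hsg | hsg
        · exact hsg p hp
        · obtain ⟨q, hq, hM⟩ := hwit p hp (ee (k + 1))
          have a := hsg q hq
          rw [e q hq] at a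
          have b : (0 : ℝ) < _ := ee_lt_iterLog _ (k + 1) 0 hM
          linarith
      exact ⟨by rw [abs_of_pos pos, e p hp], e p hp ▸ pos, fun _ => e p hp⟩
  refine ⟨?_, fun p hp => ⟨h0 p hp, fun hr => h1 hr p hp, ?_⟩,
    fun p hp => (h0 p hp).symm ▸ hpos p hp, h1n, ?_⟩
  · intro p hp
    cases r with
    | zero => simp [ee]
    | succ k =>
      have a : ee (k + 0) < -Real.log p.2 :=
        ee_lt_of_iterLog _ k 0 (fun i hi => (key i (by omega) p hp).2.1)
          (key k le_rfl p hp).2.1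
      have hp2 := hpos p hp
      show p.2 * Real.exp (ee k) ≤ 1
      rw [← Real.exp_log hp2, ← Real.exp_add, Real.exp_le_one_iff]
      simp only [Real.log_exp, add_zero] at *
      linarith
  · intro j hj hjr
    obtain ⟨k, rfl⟩ : ∃ k, j = k + 1 := ⟨j - 1, by omega⟩
    exact (key k hjr p hp).2.2 (by omega)
  · intro j hj hjr p hp
    obtain ⟨k, rfl⟩ : ∃ k, j = k + 1 := ⟨j - 1, by omega⟩
    rw [(key k hjr p hp).2.2 (by omega)]
    exact (key k hjr p hp).2.1
end

section
/- Let n ∈ ℕ, r ∈ ℕ₀ and let C ⊆ ℝⁿ × ℝ be simple. Then the following are equivalent: (i) there exists an r-logarithmic scale on C; (ii) sup C_x ≤ 1/e_r for every x ∈ π(C). (Corollary 2.20.) -/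
theorem ee_nonneg_s2 (r : ℕ) : 0 ≤ ee r := by
  cases r with
  | zero => simp [ee]
  | succ r => simp only [ee]; positivity

/-- iterated logarithms -/
noncomputable def LL : ℕ → ℝ → ℝ
  | 0, y => y
  | j + 1, y => Real.log (|LL j y|)

open Filter Topology in
theorem LL_one_tendsto : Tendsto (LL 1) (𝓝[>] 0) atBot := by
  have h : LL 1 = fun y => Real.log y := by
    funext y; simp [LL, Real.log_abs]
  rw [h]
  exact Real.tendsto_log_nhdsGT_zero

open Filter Topology in
theorem LL_tendsto (j : ℕ) : Tendsto (LL (j + 2)) (𝓝[>] 0) atTop := by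
  induction j with
  | zero =>
    have : LL 2 = fun y => Real.log (|LL 1 y|) := rfl
    rw [zero_add, this]
    exact Real.tendsto_log_atTop.comp (tendsto_abs_atBot_atTop.comp LL_one_tendsto)
  | succ j ih =>
    have : LL (j + 1 + 2) = fun y => Real.log (|LL (j + 2) y|) := rfl
    rw [this]
    exact Real.tendsto_log_atTop.comp (tendsto_abs_atTop_atTop.comp ih)

open Filter Topology in
theorem LL_abs_tendsto (j : ℕ) : Tendsto (fun y => |LL (j + 1) y|) (𝓝[>] 0) atTop := by
  cases j with
  | zero => exact tendsto_abs_atBot_atTop.comp LL_one_tendsto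
  | succ j => exact tendsto_abs_atTop_atTop.comp (LL_tendsto j)

theorem simple_pos {n : ℕ} {C : Set ((Fin n → ℝ) × ℝ)} (hC : IsSimple C) (p) (hp : p ∈ C) :
    0 < p.2 := by
  obtain ⟨d, hd, h⟩ := hC p.1 ⟨p.2, hp⟩
  exact ((h p.2).1 hp).1

open Filter Topology in
theorem simple_ev {n : ℕ} {C : Set ((Fin n → ℝ) × ℝ)} (hC : IsSimple C) (p) (hp : p ∈ C) :
    ∀ᶠ y in 𝓝[>] (0 : ℝ), (p.1, y) ∈ C := by
  obtain ⟨d, hd, h⟩ := hC p.1 ⟨p.2, hp⟩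
  have h1 := (h p.2).1 hp
  filter_upwards [Ioo_mem_nhdsGT h1.1] with y hy
  refine (h y).2 ⟨hy.1, lt_trans ?_ h1.2⟩
  exact_mod_cast hy.2

theorem simple_gt {n : ℕ} {C : Set ((Fin n → ℝ) × ℝ)} (hC : IsSimple C) (p) (hp : p ∈ C) :
    ∃ y, p.2 < y ∧ (p.1, y) ∈ C := by
  obtain ⟨d, hd, h⟩ := hC p.1 ⟨p.2, hp⟩
  have h1 := (h p.2).1 hp
  obtain ⟨z, hz, hz'⟩ := EReal.lt_iff_exists_real_btwn.1 h1.2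
  have hz2 : p.2 < z := by exact_mod_cast hz
  exact ⟨z, hz2, (h z).2 ⟨h1.1.trans hz2, hz'⟩⟩

open Filter Topology in
theorem scale_eq {n r : ℕ} {C : Set ((Fin n → ℝ) × ℝ)} (hC : IsSimple C)
    {Θ : ℕ → (Fin n → ℝ) → ℝ} {Y : ℕ → ((Fin n → ℝ) × ℝ) → ℝ}
    (H : IsLogScale n r C Θ Y) (j : ℕ) (hj : j ≤ r) : ∀ p ∈ C, Y j p = LL j p.2 := by
  induction j with
  | zero =>
    intro p hp
    have hT : Θ 0 p.1 = 0 := by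
      rcases H.center0 with h | ⟨ε, hε, h⟩
      · exact h _ ⟨p, hp, rfl⟩
      · by_contra hne
        have hpos : 0 < |Θ 0 p.1| := abs_pos.2 hne
        have h2 : 0 < |Θ 0 p.1| / 2 := by positivity
        obtain ⟨y, hy, hyC⟩ := (Filter.Eventually.and (Ioo_mem_nhdsGT h2) (simple_ev hC p hp)).exists
        change y ∈ Set.Ioo 0 (|Θ 0 p.1| / 2) at hy
        have h3 := h _ hyC
        rw [H.base _ hyC] at h3
        simp only at h3
        rw [abs_of_pos hy.1] at h3
        have h4 : |Θ 0 p.1| ≤ |y - Θ 0 p.1| + |y| := by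
          have := abs_sub_abs_le_abs_sub (Θ 0 p.1) y
          rw [abs_sub_comm] at this
          linarith
        rw [abs_of_pos hy.1] at h4
        have h5 := hy.2
        have h6 := hε.2
        have h7 := hy.1
        nlinarith
    rw [H.base p hp, hT]; simp [LL]
  | succ j ih =>
    have ih := ih (by omega)
    intro p hp
    have hs : ∀ q ∈ C, Y (j + 1) q = LL (j + 1) q.2 - Θ (j + 1) q.1 := by
      intro q hq
      rw [H.step (j + 1) (by omega) hj q hq, Nat.add_sub_cancel, ih q hq]
      rfl
    have hT : Θ (j + 1) p.1 = 0 := by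
      rcases H.centerSucc (j + 1) (by omega) hj with h | ⟨ε, hε, h⟩
      · exact h _ ⟨p, hp, rfl⟩
      · exfalso
        obtain ⟨y, hy, hyC⟩ := (((LL_abs_tendsto j).eventually_gt_atTop
          (|Θ (j + 1) p.1| / (1 - ε))).and (simple_ev hC p hp)).exists
        have h3 := h _ hyC
        rw [hs _ hyC, Nat.add_sub_cancel, ih _ hyC] at h3
        change |LL (j + 1) y - Θ (j + 1) p.1| < ε * |LL (j + 1) y| at h3
        have h4 := abs_sub_abs_le_abs_sub (LL (j + 1) y) (Θ (j + 1) p.1)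
        have h6 : 0 < 1 - ε := by linarith [hε.2]
        rw [div_lt_iff₀ h6] at hy
        nlinarith
    rw [hs p hp, hT, sub_zero]

/-- Corollary 2.20. -/
theorem exists_logScale_iff_sup_le {n r : ℕ} (C : Set ((Fin n → ℝ) × ℝ))
    (hC : IsSimple C) :
    (∃ (Θ : ℕ → (Fin n → ℝ) → ℝ) (Y : ℕ → ((Fin n → ℝ) × ℝ) → ℝ),
        IsLogScale n r C Θ Y) ↔
      ∀ p ∈ C, p.2 * ee r ≤ 1 := by
  constructor
  · rintro ⟨Θ, Y, H⟩ p hp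
    have hE := fun j hj => scale_eq hC H j hj
    have hy := simple_pos hC p hp
    cases r with
    | zero => simp [ee]
    | succ r =>
    have h1 : LL 1 p.2 < 0 := by
      rcases H.sign 1 (by omega) with h | h
      · exfalso
        obtain ⟨y, hy, hyC⟩ := ((LL_one_tendsto.eventually_lt_atBot 0).and
          (simple_ev hC p hp)).exists
        have := h _ hyC
        rw [hE 1 (by omega) _ hyC] at this
        exact lt_asymm this hy
      · rw [← hE 1 (by omega) p hp]; exact h p hp
    have h2 : ∀ j, j + 2 ≤ r + 1 → 0 < LL (j + 2) p.2 := by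
      intro j hj
      rcases H.sign (j + 2) hj with h | h
      · rw [← hE _ hj p hp]; exact h p hp
      · exfalso
        obtain ⟨y, hy, hyC⟩ := (((LL_tendsto j).eventually_gt_atTop 0).and
          (simple_ev hC p hp)).exists
        have := h _ hyC
        rw [hE _ hj _ hyC] at this
        exact lt_asymm this hy
    have hne : ∀ j, j ≤ r → LL (j + 1) p.2 ≠ 0 := by
      intro j hj
      cases j with
      | zero => exact h1.ne
      | succ j => exact (h2 j (by omega)).ne'
    have key : ∀ k j, j + k = r → ee k ≤ |LL (j + 1) p.2| := by
      intro k
      induction k with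
      | zero => intro j _; simp [ee]
      | succ k ih =>
        intro j hj
        have h3 := ih (j + 1) (by omega)
        rw [abs_of_pos (h2 j (by omega))] at h3
        change ee k ≤ Real.log (|LL (j + 1) p.2|) at h3
        exact (Real.le_log_iff_exp_le (abs_pos.2 (hne j (by omega)))).1 h3
    have h3 := key r 0 (by omega)
    rw [zero_add, abs_of_neg h1] at h3
    simp only [LL, Real.log_abs] at h3
    have h4 : Real.log p.2 ≤ - ee r := by linarith
    rw [Real.log_le_iff_le_exp hy, Real.exp_neg] at h4
    simp only [ee]
    calc p.2 * Real.exp (ee r) ≤ (Real.exp (ee r))⁻¹ * Real.exp (ee r) := by gcongr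
      _ = 1 := inv_mul_cancel₀ (Real.exp_pos _).ne'
  · intro h
    have hstep : ∀ p ∈ C, ∀ j k, j + k + 1 = r →
        ee k < |LL (j + 1) p.2| ∧ (j = 0 → LL (j + 1) p.2 < 0) ∧ (j ≠ 0 → 0 < LL (j + 1) p.2) := by
      intro p hp j
      induction j with
      | zero =>
        intro k hk
        have hr : r = k + 1 := by omega
        subst hr
        have hy := simple_pos hC p hp
        obtain ⟨z, hz, hzC⟩ := simple_gt hC p hp
        have h3 := h _ hzC
        simp only [ee] at h3
        have h5 : z ≤ Real.exp (- ee k) := by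
          rw [Real.exp_neg, ← one_div, le_div_iff₀ (Real.exp_pos _)]; exact h3
        have h4 : LL 1 p.2 < - ee k := by
          simp only [LL, Real.log_abs]
          rw [Real.log_lt_iff_lt_exp hy]
          linarith
        have h6 := ee_nonneg_s2 k
        rw [zero_add, abs_of_neg (by linarith)]
        exact ⟨by linarith, fun _ => by linarith, fun h => absurd rfl h⟩
      | succ j ih =>
        intro k hk
        have h3 := (ih (k + 1) (by omega)).1
        simp only [ee] at h3
        have h4 : ee k < LL (j + 1 + 1) p.2 := by
          change ee k < Real.log (|LL (j + 1) p.2|)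
          exact (Real.lt_log_iff_exp_lt (lt_trans (Real.exp_pos _) h3)).2 h3
        have h6 := ee_nonneg_s2 k
        have h7 : 0 < LL (j + 1 + 1) p.2 := by linarith
        rw [abs_of_pos h7]
        exact ⟨h4, fun h => by omega, fun _ => h7⟩
    refine ⟨fun _ _ => 0, fun j p => LL j p.2, ?_, ?_, ?_, Or.inl fun _ _ => rfl,
      fun _ _ _ => Or.inl fun _ _ => rfl⟩
    · intro p _; simp [LL]
    · intro j hj _ p _
      obtain ⟨i, rfl⟩ : ∃ i, j = i + 1 := ⟨j - 1, by omega⟩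
      simp [LL]
    · intro j hj
      match j with
      | 0 => exact Or.inl fun p hp => simple_pos hC p hp
      | 1 => exact Or.inr fun p hp => (hstep p hp 0 (r - 1) (by omega)).2.1 rfl
      | j + 2 => exact Or.inl fun p hp =>
          (hstep p hp (j + 1) (r - (j + 2)) (by omega)).2.2 (by omega)
end

section
/- Let r ∈ ℕ₀ and let q = (q₀,…,q_r) ∈ ℚ^{r+1} with q ≠ 0. Let j(q) := min{j : q_j ≠ 0} and let q_diff := (q₀−1,…,q_{j(q)}−1, q_{j(q)+1},…,q_r) (i.e., subtract 1 from the components with index ≤ j(q)). Then lim_{y→0⁺} | (d/dy ∏_{j=0}^{r} |y_j(y)|^{q_j}) / ∏_{j=0}^{r} |y_j(y)|^{(q_diff)_j} | = |q_{j(q)}|. (Proposition 2.24.) -/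
/-!
Statement 4 (Proposition 2.24): with `(y₀,…,y_r)` the elementary `r`-logarithmic scale
on `(0, 1/e_r)` and `q ∈ ℚ^{r+1}`, `q ≠ 0`, `j0 = j(q)` the least index with `q_{j0} ≠ 0`,
and `q_diff` obtained from `q` by subtracting `1` from all components of index `≤ j0`,
one has
`lim_{y→0⁺} | (d/dy ∏ |y_j|^{q_j}) / ∏ |y_j|^{(q_diff)_j} | = |q_{j0}|`.
(The interval `(0, 1/e_r)`, with `1/e₀ = +∞`, is expressed as `0 < y ∧ y * e_r < 1`.)
-/

open Filter Topology

/-- the elementary logarithmic scale: `y₀ = y`, `y₁ = log y`,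
`y_j = log_{j-1}(-log y)` for `j ≥ 2`. -/
noncomputable def elemScale : ℕ → ℝ → ℝ
  | 0, y => y
  | 1, y => Real.log y
  | j + 2, y => iterLog (j + 1) (-Real.log y)

noncomputable def auxL : ℕ → ℝ → ℝ
  | 0, y => y
  | j + 1, y => iterLog j (-Real.log y)

noncomputable def auxS : ℕ → ℝ
  | 0 => 1
  | _ + 1 => -1

lemma aux_abs (j : ℕ) (y : ℝ) : |elemScale j y| = |auxL j y| := by
  match j with
  | 0 => rfl
  | 1 => simp [elemScale, auxL, iterLog]
  | j + 2 => rfl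

lemma auxL_tendsto (j : ℕ) : Tendsto (auxL (j + 1)) (𝓝[>] 0) atTop := by
  induction j with
  | zero =>
    exact tendsto_neg_atBot_atTop.comp Real.tendsto_log_nhdsGT_zero
  | succ k ih => exact Real.tendsto_log_atTop.comp ih

lemma auxL_pos (j : ℕ) : ∀ᶠ y in 𝓝[>] (0 : ℝ), 0 < auxL j y := by
  cases j with
  | zero => exact self_mem_nhdsWithin
  | succ k => exact (auxL_tendsto k).eventually_gt_atTop 0

lemma auxL_deriv (j : ℕ) (y : ℝ) (h : ∀ i < j, 0 < auxL i y) :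
    HasDerivAt (auxL j) (auxS j * ∏ i ∈ Finset.range j, (auxL i y)⁻¹) y := by
  induction j with
  | zero =>
    refine (show HasDerivAt (auxL 0) 1 y from hasDerivAt_id y).congr_deriv ?_
    simp [auxS]
  | succ k ih =>
    cases k with
    | zero =>
      have h0 : 0 < y := h 0 (by simp)
      have := (Real.hasDerivAt_log h0.ne').neg
      refine (show HasDerivAt (auxL 1) _ y from this).congr_deriv ?_
      simp [auxS, auxL]
    | succ m =>
      have ih' := ih (fun i hi => h i (by omega))
      have h1 := h (m + 1) (by omega)
      have := ih'.log h1.ne'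
      rw [Finset.prod_range_succ]
      refine (show HasDerivAt (auxL (m + 1 + 1)) _ y from this).congr_deriv ?_
      simp only [auxS, div_eq_mul_inv]
      ring

lemma aux_prod_deriv (q : ℕ → ℝ) (n : ℕ) (y : ℝ) (h : ∀ i < n, 0 < auxL i y) :
    HasDerivAt (fun t => ∏ j ∈ Finset.range n, |auxL j t| ^ q j)
      ((∏ j ∈ Finset.range n, (auxL j y) ^ q j) *
        ∑ j ∈ Finset.range n, q j * auxS j * ∏ i ∈ Finset.range (j + 1), (auxL i y)⁻¹) y := by
  induction n with
  | zero => simpa using hasDerivAt_const y (1 : ℝ)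
  | succ n ih =>
    have ih' := ih (fun i hi => h i (by omega))
    have hn := h n (by omega)
    have hd := auxL_deriv n y (fun i hi => h i (by omega))
    have ha : HasDerivAt (fun t => |auxL n t|)
        (auxS n * ∏ i ∈ Finset.range n, (auxL i y)⁻¹) y := by
      refine hd.congr_of_eventuallyEq ?_
      filter_upwards [hd.continuousAt.eventually (lt_mem_nhds hn)] with t ht
      exact abs_of_pos ht
    have hp := ha.rpow_const (p := q n) (Or.inl (abs_pos.mpr hn.ne').ne')
    have hm := ih'.mul hp
    have he : ∏ j ∈ Finset.range n, |auxL j y| ^ q j = ∏ j ∈ Finset.range n, auxL j y ^ q j :=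
      Finset.prod_congr rfl fun j hj => by
        rw [abs_of_pos (h j (by have := Finset.mem_range.mp hj; omega))]
    have hf : (fun t => ∏ j ∈ Finset.range (n + 1), |auxL j t| ^ q j) =
        (fun t => ∏ j ∈ Finset.range n, |auxL j t| ^ q j) * fun t => |auxL n t| ^ q n := by
      funext t
      simp [Finset.prod_range_succ]
    rw [hf]
    refine hm.congr_deriv ?_
    rw [he, abs_of_pos hn, Finset.prod_range_succ, Finset.sum_range_succ,
      Finset.prod_range_succ _ n, Real.rpow_sub_one hn.ne']
    field_simp

lemma aux_term (j0 d : ℕ) :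
    Tendsto (fun y => (∏ i ∈ Finset.range (j0 + 1), auxL i y) *
      ∏ i ∈ Finset.range (j0 + 1 + d + 1), (auxL i y)⁻¹) (𝓝[>] 0) (𝓝 0) := by
  induction d with
  | zero =>
    have h : ∀ᶠ y in 𝓝[>] (0 : ℝ), ∀ i ∈ Finset.range (j0 + 1), 0 < auxL i y :=
      (Finset.eventually_all _).2 fun i _ => auxL_pos i
    refine (tendsto_inv_atTop_zero.comp (auxL_tendsto j0)).congr' ?_
    filter_upwards [h] with y hy
    rw [Finset.prod_range_succ _ (j0 + 1 + 0), Finset.prod_inv_distrib, ← mul_assoc]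
    rw [add_zero, mul_inv_cancel₀ (Finset.prod_pos hy).ne', one_mul]
    rfl
  | succ d ih =>
    have := ih.mul (tendsto_inv_atTop_zero.comp (auxL_tendsto (j0 + 1 + d)))
    rw [zero_mul] at this
    refine this.congr fun y => ?_
    rw [← add_assoc (j0 + 1) d 1, Finset.prod_range_succ _ (j0 + 1 + d + 1), ← mul_assoc]
    rfl

/-- Proposition 2.24. -/
theorem deriv_elemScale_prod_limit (r : ℕ) (q : ℕ → ℚ) (j0 : ℕ) (hj0 : j0 ≤ r)
    (hq : q j0 ≠ 0) (hmin : ∀ i < j0, q i = 0) :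
    Tendsto
      (fun y : ℝ =>
        |deriv (fun t : ℝ => ∏ j ∈ Finset.range (r + 1), |elemScale j t| ^ ((q j : ℝ))) y /
          ∏ j ∈ Finset.range (r + 1),
            |elemScale j y| ^ (((if j ≤ j0 then q j - 1 else q j) : ℚ) : ℝ)|)
      (nhdsWithin 0 {y : ℝ | 0 < y ∧ y * ee r < 1}) (nhds |(q j0 : ℝ)|) := by
  have hsub : {y : ℝ | 0 < y ∧ y * ee r < 1} ⊆ Set.Ioi 0 := fun y hy => And.left hy
  refine Tendsto.mono_left ?_ (nhdsWithin_mono _ hsub)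
  simp only [aux_abs]
  have hpos : ∀ᶠ y in 𝓝[>] (0 : ℝ), ∀ i ∈ Finset.range (r + 1), 0 < auxL i y :=
    (Finset.eventually_all _).2 fun i _ => auxL_pos i
  have hS : |(q j0 : ℝ)| = |(q j0 : ℝ) * auxS j0| := by
    cases j0 <;> simp [auxS]
  rw [hS]
  have hlim : Tendsto (fun y => ∑ j ∈ Finset.range (r + 1), (q j : ℝ) * auxS j *
      ((∏ i ∈ Finset.range (j0 + 1), auxL i y) * ∏ i ∈ Finset.range (j + 1), (auxL i y)⁻¹))
      (𝓝[>] 0) (𝓝 (∑ j ∈ Finset.range (r + 1), if j = j0 then (q j0 : ℝ) * auxS j0 else 0)) := by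
    refine tendsto_finsetSum _ fun j hj => ?_
    rcases lt_trichotomy j j0 with hlt | heq | hgt
    · simp [hmin j hlt, hlt.ne]
    · subst heq
      rw [if_pos rfl]
      refine tendsto_const_nhds.congr' ?_
      filter_upwards [hpos] with y hy
      rw [Finset.prod_inv_distrib, mul_inv_cancel₀, mul_one]
      refine (Finset.prod_pos fun i hi => hy i ?_).ne'
      simp only [Finset.mem_range] at *
      omega
    · rw [if_neg hgt.ne']
      obtain ⟨d, rfl⟩ : ∃ d, j = j0 + 1 + d := ⟨j - (j0 + 1), by omega⟩
      simpa using (aux_term j0 d).const_mul ((q (j0 + 1 + d) : ℝ) * auxS (j0 + 1 + d))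
  rw [Finset.sum_ite_eq' , if_pos (Finset.mem_range.mpr (by omega))] at hlim
  refine hlim.abs.congr' ?_
  filter_upwards [hpos] with y hy
  congr 1
  rw [(aux_prod_deriv (fun j => (q j : ℝ)) (r + 1) y
    (fun i hi => hy i (Finset.mem_range.mpr hi))).deriv]
  have hP : 0 < ∏ j ∈ Finset.range (r + 1), auxL j y ^ (q j : ℝ) :=
    Finset.prod_pos fun i hi => Real.rpow_pos_of_pos (hy i hi) _
  have hQ : 0 < ∏ i ∈ Finset.range (j0 + 1), auxL i y :=
    Finset.prod_pos fun i hi => hy i (by simp only [Finset.mem_range] at *; omega)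
  have hG : ∏ j ∈ Finset.range (r + 1),
      |auxL j y| ^ (((if j ≤ j0 then q j - 1 else q j) : ℚ) : ℝ) =
      (∏ j ∈ Finset.range (r + 1), auxL j y ^ (q j : ℝ)) *
        (∏ i ∈ Finset.range (j0 + 1), auxL i y)⁻¹ := by
    have h1 : ∏ i ∈ Finset.range (j0 + 1), auxL i y =
        ∏ i ∈ Finset.range (r + 1), if i ≤ j0 then auxL i y else 1 := by
      rw [← Finset.prod_filter]
      congr 1
      ext i
      simp only [Finset.mem_range, Finset.mem_filter]
      omega
    rw [h1, ← Finset.prod_inv_distrib, ← Finset.prod_mul_distrib]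
    refine Finset.prod_congr rfl fun j hj => ?_
    rw [abs_of_pos (hy j hj)]
    split_ifs
    · push_cast
      rw [Real.rpow_sub_one (hy j hj).ne', div_eq_mul_inv]
    · simp
  rw [hG, mul_div_mul_left _ _ hP.ne', div_inv_eq_mul, Finset.sum_mul]
  refine Finset.sum_congr rfl fun j _ => ?_
  ring
end

section
/- Let U ⊆ ℝⁿ be open, g : U → ℝ a function, and a ∈ U. Then the following are equivalent: (i) g is real analytic at a; (ii) g is G^∞ at a and there is ε > 0 such that for every z ∈ ℝⁿ with |z| ≤ 1 the function y ↦ g(a + y·z) is defined and real analytic on (−ε, ε) (in particular a + y·z ∈ U for all |y| < ε). (Fact 3.5, the Gateaux-differentiability characterization of real analyticity.) -/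
/-!
Statement 14 (Fact 3.5): for `U ⊆ ℝⁿ` open, `g : U → ℝ` and `a ∈ U`, the function
`g` is real analytic at `a` iff `g` is `G^∞` at `a` and there is `ε > 0` such that
for every `z` with `‖z‖ ≤ 1` the function `y ↦ g(a + y·z)` is defined and real
analytic on `(-ε, ε)`.
-/

/-- `g` is `G^k` (k-times Gateaux differentiable) at `a`: for every direction `z`
the function `y ↦ g (a + y • z)` is `C^k` at `0`, and `z ↦ (d^k/dy^k) g(a+yz)|₀`
is given by a homogeneous polynomial of degree `k` in the coordinates of `z`. -/
def IsGk (n k : ℕ) (g : EuclideanSpace ℝ (Fin n) → ℝ) (a : EuclideanSpace ℝ (Fin n)) :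
    Prop :=
  (∀ z : EuclideanSpace ℝ (Fin n), ContDiffAt ℝ k (fun y : ℝ => g (a + y • z)) 0) ∧
  ∃ P : MvPolynomial (Fin n) ℝ, P.IsHomogeneous k ∧
    ∀ z : EuclideanSpace ℝ (Fin n),
      MvPolynomial.eval (fun i => z i) P = iteratedDeriv k (fun y : ℝ => g (a + y • z)) 0

section helpers
open scoped ContDiff

theorem bs_bound {E : Type*} [NormedAddCommGroup E] [NormedSpace ℝ E] (k : ℕ) :
    ∀ (f : E → ℝ) (L : ContinuousMultilinearMap ℝ (fun _ : Fin k => E) ℝ), ContDiff ℝ ∞ f →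
    (∀ x, iteratedFDeriv ℝ k f x = L) → ∀ (v : Fin k → E) (x : E) (C : ℝ),
    (∀ y, ‖y - x‖ ≤ ∑ i, ‖v i‖ → |f y| ≤ C) → |L v| ≤ 2 ^ k * C := by
  induction k with
  | zero =>
    intro f L hf hL v x C h
    rw [← hL x]
    simpa using h x (by simp)
  | succ k ih =>
    intro f L hf hL v x C h
    have hf2 : ContDiff ℝ ∞ (fun y => f (y + v 0)) := hf.comp (contDiff_id.add contDiff_const)
    have hd : Differentiable ℝ (iteratedFDeriv ℝ k f) :=
      hf.differentiable_iteratedFDeriv (by exact_mod_cast ENat.natCast_lt_top k)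
    have key := ih (fun y => f (y + v 0) - f y) (L.curryLeft (v 0)) (hf2.sub hf) ?_
      (Fin.tail v) x (2 * C) ?_
    · have : L.curryLeft (v 0) (Fin.tail v) = L v := by
        simp [ContinuousMultilinearMap.curryLeft_apply]
      rw [this] at key
      calc _ ≤ _ := key
        _ = _ := by ring
    · intro y
      have h1 : iteratedFDeriv ℝ k (fun y => f (y + v 0) - f y) y
          = iteratedFDeriv ℝ k f (y + v 0) - iteratedFDeriv ℝ k f y := by
        have := iteratedFDeriv_sub_apply (𝕜 := ℝ) (i := k) (x := y) (f := fun y => f (y + v 0)) (g := f)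
          (hf2.contDiffAt.of_le (by exact_mod_cast le_top)) (hf.contDiffAt.of_le (by exact_mod_cast le_top))
        rw [iteratedFDeriv_comp_add_right] at this
        exact this
      rw [h1]
      have hc : ∀ w, fderiv ℝ (iteratedFDeriv ℝ k f) w = L.curryLeft := by
        intro w
        ext a m
        have := iteratedFDeriv_succ_apply_left (𝕜 := ℝ) (f := f) (x := w) (n := k) (Fin.cons a m)
        rw [hL w] at this
        simp only [Fin.cons_zero, Fin.tail_cons] at this
        rw [← this]
        simp [ContinuousMultilinearMap.curryLeft_apply]
      have hz : ∀ w, fderiv ℝ (fun y => iteratedFDeriv ℝ k f y - L.curryLeft y) w = 0 := by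
        intro w
        rw [fderiv_fun_sub (hd w) (ContinuousLinearMap.differentiableAt _), hc w]
        erw [ContinuousLinearMap.fderiv]
        simp
      have := is_const_of_fderiv_eq_zero (𝕜 := ℝ) (hd.sub (ContinuousLinearMap.differentiable _)) hz (y + v 0) y
      simp only [Pi.sub_apply, map_add] at this
      rw [sub_eq_sub_iff_add_eq_add] at this
      rw [sub_eq_iff_eq_add]
      have h3 : iteratedFDeriv ℝ k f (y + v 0) + L.curryLeft y
         = (L.curryLeft (v 0) + iteratedFDeriv ℝ k f y) + L.curryLeft y := by
        rw [this]; abel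
      exact add_right_cancel h3
    · intro y hy
      have hs : ∑ i, ‖v i‖ = ‖v 0‖ + ∑ i, ‖Fin.tail v i‖ := Fin.sum_univ_succ _
      have h1 := h y (by rw [hs]; linarith [norm_nonneg (v 0)])
      have h2 := h (y + v 0) (by
        rw [hs, add_sub_right_comm]; linarith [norm_add_le (y - x) (v 0)])
      simp only [abs_le] at *
      constructor <;> linarith [h1.1,h1.2,h2.1,h2.2]

theorem bs_homog {E : Type*} [NormedAddCommGroup E] [NormedSpace ℝ E] (k : ℕ) (f : E → ℝ)
    (hf : ContDiff ℝ ∞ f) (hh : ∀ (t : ℝ) x, f (t • x) = t ^ k * f x) :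
    (∀ x, iteratedFDeriv ℝ k f x = iteratedFDeriv ℝ k f 0) ∧
    ∀ z, iteratedFDeriv ℝ k f 0 (fun _ => z) = k.factorial * f z := by
  have hfk : ContDiff ℝ k f := hf.of_le (by exact_mod_cast le_top)
  constructor
  · intro x
    have hconst : ∀ t : ℝ, t ≠ 0 → iteratedFDeriv ℝ k f (t • x) = iteratedFDeriv ℝ k f x := by
      intro t ht
      have h1 := ContinuousLinearMap.iteratedFDeriv_comp_right (t • ContinuousLinearMap.id ℝ E)
        hfk x (i := k) le_rfl
      have h2 : (f ∘ (t • ContinuousLinearMap.id ℝ E)) = fun x => t ^ k • f x := by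
        ext y; simp [hh]
      rw [h2, iteratedFDeriv_const_smul_apply' hfk.contDiffAt] at h1
      ext m
      have h3 := congrArg (fun q => q m) h1
      simp only [smul_apply, smul_eq_mul,
        ContinuousMultilinearMap.compContinuousLinearMap_apply, ContinuousLinearMap.id_apply] at h3
      rw [ContinuousMultilinearMap.map_smul_univ] at h3
      simp at h3
      rcases h3 with h3 | h3
      · exact h3.symm
      · exact absurd h3.1 ht
    have hc : Continuous (fun t : ℝ => iteratedFDeriv ℝ k f (t • x)) :=
      (hf.continuous_iteratedFDeriv (by exact_mod_cast le_top)).comp (by fun_prop)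
    have ht := (hc.tendsto 0).mono_left (nhdsWithin_le_nhds (s := {0}ᶜ))
    rw [zero_smul] at ht
    refine tendsto_nhds_unique (tendsto_const_nhds.congr' ?_) ht
    filter_upwards [self_mem_nhdsWithin] with t htt
    exact (hconst t htt).symm
  · intro z
    have h1 := ContinuousLinearMap.iteratedFDeriv_comp_right (ContinuousLinearMap.toSpanSingleton ℝ z)
        hfk 0 (i := k) le_rfl
    have h2 : (f ∘ (ContinuousLinearMap.toSpanSingleton ℝ z)) = fun t : ℝ => t ^ k * f z := by
      ext y; simp [hh]
    have h3 := congrArg (fun q => q (fun _ => 1)) h1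
    rw [h2] at h3
    simp at h3
    rw [← h3, ← iteratedDeriv_eq_iteratedFDeriv]
    rw [iteratedDeriv_mul_const_field]
    simp [Nat.descFactorial_self]

theorem bs_line {E : Type*} [NormedAddCommGroup E] [NormedSpace ℝ E] {g : E → ℝ}
    {p : FormalMultilinearSeries ℝ E ℝ} {a : E} (hp : HasFPowerSeriesAt g p a) (z : E) (k : ℕ) :
    iteratedDeriv k (fun y : ℝ => g (a + y • z)) 0 = k.factorial * p k (fun _ => z) := by
  have h0 : HasFPowerSeriesAt (fun w => g (a + w)) p 0 := by
    have := hp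
    obtain ⟨r, hr⟩ := hp
    refine ⟨r, hr.r_le, hr.r_pos, ?_⟩
    intro y hy
    simpa using hr.hasSum hy
  have h1 : HasFPowerSeriesAt (fun y : ℝ => g (a + y • z))
      (p.compContinuousLinearMap (ContinuousLinearMap.toSpanSingleton ℝ z)) 0 := by
    have := HasFPowerSeriesAt.compContinuousLinearMap (u := ContinuousLinearMap.toSpanSingleton ℝ z)
      (x := 0) (f := fun w => g (a + w)) (pf := p) (by simpa using h0)
    exact this
  have h2 := h1.analyticAt.hasFPowerSeriesAt
  have h3 := h1.eq_formalMultilinearSeries h2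
  have h4 := congrArg (fun q => q k (fun _ => 1)) h3
  have h5 : (p.compContinuousLinearMap (ContinuousLinearMap.toSpanSingleton ℝ z)) k (fun _ => 1)
      = p k (fun _ => z) := by
    rw [FormalMultilinearSeries.compContinuousLinearMap_apply]
    congr 1
    ext i
    simp
  simp only [h5, FormalMultilinearSeries.ofScalars_apply_eq, one_pow, smul_eq_mul, mul_one] at h4
  rw [h4]
  field_simp

theorem bs_poly {n k : ℕ} (p : ContinuousMultilinearMap ℝ (fun _ : Fin k => EuclideanSpace ℝ (Fin n)) ℝ) :
    ∃ P : MvPolynomial (Fin n) ℝ, P.IsHomogeneous k ∧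
      ∀ z : EuclideanSpace ℝ (Fin n), MvPolynomial.eval (fun i => z i) P = p (fun _ => z) := by
  classical
  let b := (EuclideanSpace.basisFun (Fin n) ℝ)
  refine ⟨∑ f : Fin k → Fin n, MvPolynomial.C (p fun i => b (f i)) * ∏ i, MvPolynomial.X (f i), ?_, ?_⟩
  · apply MvPolynomial.IsHomogeneous.sum
    intro f _
    have h1 := MvPolynomial.IsHomogeneous.prod (R := ℝ) Finset.univ (fun i : Fin k => (MvPolynomial.X (f i) : MvPolynomial (Fin n) ℝ))
      (fun _ => 1) (fun i _ => MvPolynomial.isHomogeneous_X _ _)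
    simpa using (MvPolynomial.isHomogeneous_C (Fin n) (p fun i => b (f i))).mul h1
  · intro z
    have hz : z = ∑ i, z i • b i := by
      have := b.sum_repr z
      simpa [b] using this.symm
    conv_rhs => rw [hz]
    rw [ContinuousMultilinearMap.map_sum]
    simp only [map_sum, map_mul, MvPolynomial.eval_C, map_prod, MvPolynomial.eval_X]
    refine Finset.sum_congr rfl fun f _ => ?_
    rw [ContinuousMultilinearMap.map_smul_univ, smul_eq_mul, mul_comm]

theorem bs_evalContDiff {n : ℕ} (P : MvPolynomial (Fin n) ℝ) :
    ContDiff ℝ ∞ (fun z : EuclideanSpace ℝ (Fin n) => MvPolynomial.eval (fun i => z i) P) := by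
  induction P using MvPolynomial.induction_on with
  | C a => simpa using contDiff_const
  | add p q hp hq => simpa using hp.add hq
  | mul_X p i hp =>
    simp only [map_mul, MvPolynomial.eval_X]
    exact hp.mul (by fun_prop)

theorem bs_evalHomog {n k : ℕ} (P : MvPolynomial (Fin n) ℝ) (hP : P.IsHomogeneous k) (t : ℝ)
    (z : EuclideanSpace ℝ (Fin n)) : MvPolynomial.eval (fun i => (t • z) i) P
      = t ^ k * MvPolynomial.eval (fun i => z i) P := by
  rw [MvPolynomial.eval_eq, MvPolynomial.eval_eq, Finset.mul_sum]
  refine Finset.sum_congr rfl fun d hd => ?_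
  have h1 := hP (MvPolynomial.mem_support_iff.1 hd)
  simp only [PiLp.smul_apply, smul_eq_mul, mul_pow, Finset.prod_mul_distrib, Finset.prod_pow_eq_pow_sum]
  have : ∑ i ∈ d.support, d i = k := by
    rw [← h1]; simp [Finsupp.weight_apply, Finsupp.sum]
  rw [this]; ring

/-- norm bound -/
theorem bs_opNorm {E : Type*} [NormedAddCommGroup E] [NormedSpace ℝ E] (k : ℕ) (f : E → ℝ)
    (hf : ContDiff ℝ ∞ f) (hh : ∀ (t : ℝ) x, f (t • x) = t ^ k * f x) (x : E) (r C : ℝ) (hr : 0 < r)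
    (hC : ∀ y, ‖y - x‖ ≤ r → |f y| ≤ C) :
    ‖iteratedFDeriv ℝ k f 0‖ ≤ 2 ^ k * C * ((k + 1) / r) ^ k := by
  have hC0 : 0 ≤ C := (abs_nonneg _).trans (hC x (by simpa using hr.le))
  refine ContinuousMultilinearMap.opNorm_le_bound (by positivity) fun v => ?_
  rw [Real.norm_eq_abs]
  by_cases hv : ∃ i, v i = 0
  · obtain ⟨i, hi⟩ := hv
    rw [ContinuousMultilinearMap.map_coord_zero _ i hi]
    simp only [abs_zero]; positivity
  · push Not at hv
    have hv' : ∀ i, 0 < ‖v i‖ := fun i => norm_pos_iff.2 (hv i)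
    set c : ℝ := r / (k + 1) with hc
    have hcp : 0 < c := by positivity
    have key := bs_bound k f _ hf (bs_homog k f hf hh).1 (fun i => (c / ‖v i‖) • v i) x C ?_
    · rw [ContinuousMultilinearMap.map_smul_univ, smul_eq_mul, abs_mul, Finset.prod_div_distrib,
        Finset.prod_const, Finset.card_univ, Fintype.card_fin] at key
      have hpp : 0 < ∏ i, ‖v i‖ := Finset.prod_pos fun i _ => hv' i
      rw [abs_of_pos (by positivity), div_mul_eq_mul_div, div_le_iff₀ hpp] at key
      have hcc : (((k : ℝ) + 1) / r) ^ k = (c ^ k)⁻¹ := by rw [hc, ← inv_pow, inv_div]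
      rw [hcc]
      have hck : 0 < c ^ k := by positivity
      calc _ = (c ^ k)⁻¹ * (c ^ k * |(iteratedFDeriv ℝ k f 0) v|) := by field_simp
        _ ≤ (c ^ k)⁻¹ * (2 ^ k * C * ∏ i, ‖v i‖) := by gcongr
        _ = _ := by ring
    · intro y hy
      apply hC
      refine hy.trans ?_
      have : ∀ i, ‖(c / ‖v i‖) • v i‖ = c := by
        intro i
        rw [norm_smul, Real.norm_of_nonneg (by positivity), div_mul_cancel₀ _ (hv' i).ne']
      simp only [this, Finset.sum_const, Finset.card_univ, Fintype.card_fin, nsmul_eq_mul]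
      rw [hc, mul_div_assoc', div_le_iff₀ (by positivity)]
      nlinarith

theorem bs_series {n : ℕ} (D : ℕ → EuclideanSpace ℝ (Fin n) → ℝ)
    (hD : ∀ k, ContDiff ℝ ∞ (D k)) (hh : ∀ k (t : ℝ) x, D k (t • x) = t ^ k * D k x)
    (hb : ∀ z, ∃ M : ℕ, ∀ k, |D k z| ≤ k.factorial * (M : ℝ) ^ (k + 1)) :
    ∃ q : FormalMultilinearSeries ℝ (EuclideanSpace ℝ (Fin n)) ℝ, 0 < q.radius ∧
      ∀ k z, k.factorial * q k (fun _ => z) = D k z := by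
  let F : ℕ → Set (EuclideanSpace ℝ (Fin n)) := fun M =>
    {z | ∀ k, |D k z| ≤ k.factorial * (M : ℝ) ^ (k + 1)}
  have hF : ∀ M, IsClosed (F M) := by
    intro M
    have : F M = ⋂ k, {z | |D k z| ≤ k.factorial * (M : ℝ) ^ (k + 1)} := by
      ext z; simp [F]
    rw [this]
    exact isClosed_iInter fun k => isClosed_le (hD k).continuous.abs continuous_const
  have hU : ⋃ M, F M = Set.univ := by
    ext z
    simpa [F] using hb z
  obtain ⟨M, x, hx⟩ := nonempty_interior_of_iUnion_of_closed hF hU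
  obtain ⟨r, hr, hball⟩ := Metric.nhds_basis_closedBall.mem_iff.1 (mem_interior_iff_mem_nhds.1 hx)
  have hbd : ∀ k y, ‖y - x‖ ≤ r → |D k y| ≤ k.factorial * (M : ℝ) ^ (k + 1) := by
    intro k y hy
    exact hball (by simpa [dist_eq_norm] using hy) k
  let q : FormalMultilinearSeries ℝ (EuclideanSpace ℝ (Fin n)) ℝ := fun k =>
    (((k.factorial : ℝ) ^ 2)⁻¹) • iteratedFDeriv ℝ k (D k) 0
  refine ⟨q, ?_, ?_⟩
  · set e := Real.exp 1
    have he : 0 < e := Real.exp_pos 1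
    set K : ℝ := 2 * M * e / r
    have hK : 0 ≤ K := by positivity
    have hq : ∀ k, ‖q k‖ ≤ (M * e) * K ^ k := by
      intro k
      have h1 := bs_opNorm k (D k) (hD k) (hh k) x r _ hr (hbd k)
      have hfac : (0 : ℝ) < k.factorial := by positivity
      have h2 : ((k : ℝ) + 1) ^ k ≤ k.factorial * e ^ (k + 1) := by
        have := Real.pow_div_factorial_le_exp (x := (k : ℝ) + 1) (by positivity) k
        rw [div_le_iff₀ hfac] at this
        have h3 : Real.exp ((k : ℝ) + 1) = e ^ (k + 1) := by
          rw [← Real.exp_nat_mul]; push_cast; ring_nf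
        rw [h3] at this
        linarith
      calc ‖q k‖ = ((k.factorial : ℝ) ^ 2)⁻¹ * ‖iteratedFDeriv ℝ k (D k) 0‖ := by
            simp only [q]
            rw [norm_smul, Real.norm_of_nonneg (by positivity)]
        _ ≤ ((k.factorial : ℝ) ^ 2)⁻¹ * (2 ^ k * (k.factorial * (M : ℝ) ^ (k + 1)) * ((k + 1) / r) ^ k) := by
            gcongr
        _ = ((k.factorial : ℝ))⁻¹ * (2 ^ k * (M : ℝ) ^ (k + 1) * (((k : ℝ) + 1) ^ k / r ^ k)) := by
            rw [div_pow]; field_simp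
        _ ≤ ((k.factorial : ℝ))⁻¹ * (2 ^ k * (M : ℝ) ^ (k + 1) * ((k.factorial * e ^ (k + 1)) / r ^ k)) := by
            gcongr
        _ = (M * e) * K ^ k := by
            simp only [K]; rw [div_pow, mul_pow, mul_pow]; field_simp; ring
    let ρ : NNReal := ⟨(K + 1)⁻¹, by positivity⟩
    have hρ : (ρ : ENNReal) ≤ q.radius := by
      apply q.le_radius_of_bound (M * e)
      intro k
      have : (ρ : ℝ) = (K + 1)⁻¹ := rfl
      rw [this]
      calc ‖q k‖ * ((K + 1)⁻¹) ^ k ≤ (M * e) * K ^ k * ((K + 1)⁻¹) ^ k := by gcongr; exact hq k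
        _ = (M * e) * (K / (K + 1)) ^ k := by rw [div_eq_mul_inv, mul_pow]; ring
        _ ≤ (M * e) * 1 := by
          gcongr
          apply pow_le_one₀ (by positivity)
          rw [div_le_one (by positivity)]; linarith
        _ = _ := mul_one _
    refine lt_of_lt_of_le ?_ hρ
    have : 0 < (K + 1)⁻¹ := by positivity
    exact_mod_cast this
  · intro k z
    have h1 := (bs_homog k (D k) (hD k) (hh k)).2 z
    have h2 : q k (fun _ => z) = ((k.factorial : ℝ) ^ 2)⁻¹ * iteratedFDeriv ℝ k (D k) 0 (fun _ => z) := rfl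
    rw [h2, h1]
    field_simp

theorem bs_geom {f : ℝ → ℝ} (hf : AnalyticAt ℝ f 0) :
    ∃ M : ℕ, ∀ k, |iteratedDeriv k f 0| ≤ k.factorial * (M : ℝ) ^ (k + 1) := by
  have h := hf.hasFPowerSeriesAt
  obtain ⟨C, r, hC, hr, hb⟩ := FormalMultilinearSeries.le_mul_pow_of_radius_pos _ h.radius_pos
  obtain ⟨M, hM⟩ := exists_nat_ge (max C r)
  refine ⟨M, fun k => ?_⟩
  have h1 := hb k
  rw [FormalMultilinearSeries.ofScalars_norm, Real.norm_eq_abs, abs_div, Nat.abs_cast,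
    div_le_iff₀ (by positivity)] at h1
  calc _ ≤ _ := h1
    _ ≤ (M * (M : ℝ) ^ k) * k.factorial := by
      have := le_of_max_le_left hM
      have := le_of_max_le_right hM
      gcongr
    _ = _ := by ring

theorem bs_lineAnalytic {E : Type*} [NormedAddCommGroup E] [NormedSpace ℝ E] {g : E → ℝ}
    {a z : E} {y : ℝ} (h : AnalyticAt ℝ g (a + y • z)) :
    AnalyticAt ℝ (fun t : ℝ => g (a + t • z)) y := by
  have h2 : AnalyticAt ℝ (fun t : ℝ => a + t • z) y :=
    analyticAt_const.add (analyticAt_id.smul analyticAt_const)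
  exact AnalyticAt.fun_comp (f := fun t : ℝ => a + t • z) h h2

end helpers

/-- Fact 3.5: Gateaux-differentiability characterization of real analyticity. -/
theorem analyticAt_iff_Ginfty_and_analytic_on_lines {n : ℕ}
    (U : Set (EuclideanSpace ℝ (Fin n))) (hU : IsOpen U)
    (g : EuclideanSpace ℝ (Fin n) → ℝ) (a : EuclideanSpace ℝ (Fin n)) (ha : a ∈ U) :
    AnalyticAt ℝ g a ↔
      ((∀ k : ℕ, 1 ≤ k → IsGk n k g a) ∧
        ∃ ε : ℝ, 0 < ε ∧ ∀ z : EuclideanSpace ℝ (Fin n), ‖z‖ ≤ 1 →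
          ∀ y ∈ Set.Ioo (-ε) ε,
            a + y • z ∈ U ∧ AnalyticAt ℝ (fun t : ℝ => g (a + t • z)) y) := by
  constructor
  · intro hg
    refine ⟨fun k _ => ⟨fun z => ?_, ?_⟩, ?_⟩
    · exact (bs_lineAnalytic (by simpa using hg)).contDiffAt
    · obtain ⟨p, hp⟩ := hg
      obtain ⟨P, hP, hPe⟩ := bs_poly ((k.factorial : ℝ) • p k)
      refine ⟨P, hP, fun z => ?_⟩
      rw [hPe, bs_line hp]
      rfl
    · have hev := hg.eventually_analyticAt.and (hU.mem_nhds ha)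
      obtain ⟨ε, hε, hb⟩ := Metric.eventually_nhds_iff.1 hev
      refine ⟨ε, hε, fun z hz y hy => ?_⟩
      have hd : dist (a + y • z) a < ε := by
        rw [dist_eq_norm, add_sub_cancel_left, norm_smul, Real.norm_eq_abs]
        have : |y| < ε := abs_lt.2 hy
        nlinarith [abs_nonneg y, norm_nonneg z]
      exact ⟨(hb hd).2, bs_lineAnalytic (hb hd).1⟩
  · rintro ⟨hG, ε, hε, hline⟩
    have hP : ∀ k, ∃ P : MvPolynomial (Fin n) ℝ, P.IsHomogeneous k ∧
        ∀ z : EuclideanSpace ℝ (Fin n),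
          MvPolynomial.eval (fun i => z i) P = iteratedDeriv k (fun y : ℝ => g (a + y • z)) 0 := by
      intro k
      rcases Nat.eq_zero_or_pos k with rfl | hk
      · exact ⟨MvPolynomial.C (g a), MvPolynomial.isHomogeneous_C _ _, fun z => by simp⟩
      · exact (hG k hk).2
    choose P hPh hPe using hP
    have hb1 : ∀ z : EuclideanSpace ℝ (Fin n), ‖z‖ ≤ 1 → AnalyticAt ℝ (fun t : ℝ => g (a + t • z)) 0 :=
      fun z hz => (hline z hz 0 ⟨by linarith, hε⟩).2
    have hb2 : ∀ z : EuclideanSpace ℝ (Fin n), AnalyticAt ℝ (fun t : ℝ => g (a + t • z)) 0 := by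
      intro z
      have hz : 0 < ‖z‖ + 1 := by positivity
      have h1 := hb1 ((‖z‖ + 1)⁻¹ • z) (by
        rw [norm_smul, norm_inv, Real.norm_of_nonneg hz.le, inv_mul_le_iff₀ hz]; linarith)
      have h2 : AnalyticAt ℝ (fun t : ℝ => t * (‖z‖ + 1)) 0 := analyticAt_id.mul analyticAt_const
      have h3 := AnalyticAt.fun_comp (f := fun t : ℝ => t * (‖z‖ + 1)) (x := 0)
        (g := fun t : ℝ => g (a + t • ((‖z‖ + 1)⁻¹ • z))) (by simpa using h1) h2
      convert h3 using 3 with t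
      rw [smul_smul, mul_assoc, mul_inv_cancel₀ hz.ne', mul_one]
    obtain ⟨q, hq, hqD⟩ := bs_series
      (fun k (z : EuclideanSpace ℝ (Fin n)) => MvPolynomial.eval (fun i => z i) (P k))
      (fun k => bs_evalContDiff _) (fun k t x => bs_evalHomog _ (hPh k) t x) (by
        intro z
        obtain ⟨M, hM⟩ := bs_geom (hb2 z)
        exact ⟨M, fun k => by rw [hPe]; exact hM k⟩)
    have hfp : HasFPowerSeriesAt (fun x => q.sum (x - a)) q a := by
      have := (q.hasFPowerSeriesOnBall hq).hasFPowerSeriesAt.comp_sub a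
      simpa using this
    set h := fun x => q.sum (x - a) with hh
    obtain ⟨δ, hδ, hδb⟩ := Metric.eventually_nhds_iff.1 hfp.analyticAt.eventually_analyticAt
    refine hfp.analyticAt.congr ?_
    rw [Filter.EventuallyEq, Metric.eventually_nhds_iff]
    refine ⟨min (ε / 2) (δ / 2), by positivity, fun x hx => ?_⟩
    rw [dist_eq_norm, lt_min_iff] at hx
    set z := (2 / ε) • (x - a) with hz
    have hzn : ‖z‖ = 2 / ε * ‖x - a‖ := by
      rw [hz, norm_smul, Real.norm_of_nonneg (by positivity)]
    have hz1 : ‖z‖ ≤ 1 := by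
      rw [hzn, div_mul_eq_mul_div, div_le_one hε]; linarith [hx.1]
    have e1 : AnalyticOnNhd ℝ (fun t : ℝ => g (a + t • z)) (Set.Ioo (-ε) ε) :=
      fun y hy => (hline z hz1 y hy).2
    have e2 : AnalyticOnNhd ℝ (fun t : ℝ => h (a + t • z)) (Set.Ioo (-ε) ε) := by
      intro y hy
      apply bs_lineAnalytic
      apply hδb
      rw [dist_eq_norm, add_sub_cancel_left, norm_smul, Real.norm_eq_abs, hzn]
      have hy' : |y| ≤ ε := (abs_lt.2 hy).le
      calc |y| * (2 / ε * ‖x - a‖) ≤ ε * (2 / ε * ‖x - a‖) := by gcongr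
        _ = 2 * ‖x - a‖ := by field_simp
        _ < δ := by linarith [hx.2]
    have h0 : (0 : ℝ) ∈ Set.Ioo (-ε) ε := ⟨by linarith, hε⟩
    have f1 := (e1 0 h0).hasFPowerSeriesAt
    have f2 := (e2 0 h0).hasFPowerSeriesAt
    have hco : ∀ k, iteratedDeriv k (fun t : ℝ => h (a + t • z)) 0
        = iteratedDeriv k (fun t : ℝ => g (a + t • z)) 0 := by
      intro k
      rw [bs_line hfp, hqD, hPe]
    simp only [hco] at f2
    have heq : (fun t : ℝ => h (a + t • z)) =ᶠ[nhds 0] (fun t : ℝ => g (a + t • z)) := by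
      filter_upwards [f1.eventually_hasSum, f2.eventually_hasSum] with t h1 h2
      simpa using h2.unique h1
    have := e2.eqOn_of_preconnected_of_eventuallyEq e1 isPreconnected_Ioo h0 heq
      (show ε / 2 ∈ Set.Ioo (-ε) ε from ⟨by linarith, by linarith⟩)
    have hxe : a + (ε / 2) • z = x := by
      rw [hz, smul_smul, show ε / 2 * (2 / ε) = 1 by field_simp, one_smul]; abel
    simpa only [hxe] using this
end
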